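/- (Para-complex analogue of Lemma 2) Let n ∈ Im(Ca') with g(n,n) = −1 (a point of the pseudosphere S^{3,3} of imaginary radius), and let X, Y, Z ∈ Im(Ca') with g(X,n) = g(Y,n) = g(Z,n) = 0 (tangent vectors to S^{3,3} at n). With P X := n×X the Cayley almost para-complex structure and Ω(X,Y,Z) := g(X×Y, Z), one has Ω(PX, Y, Z) = Ω(X, PY, Z) = Ω(X, Y, PZ); explicitly, g((n×X)×Y, Z) = g(X×(n×Y), Z) = g(X×Y, n×Z). -/

import Mathlib

-- The split octonion algebra Ca' as pairs of real quaternions.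
noncomputable section

abbrev Ca : Type := Quaternion ℝ × Quaternion ℝ

namespace Ca

/-- Split octonion multiplication: (a,b)·(c,d) = (ac + (conj d)b, da + b(conj c)). -/
def mul (x y : Ca) : Ca :=
  (x.1 * y.1 + star y.2 * x.2, y.2 * x.1 + x.2 * star y.1)

/-- The unit (1,0). -/
def one : Ca := (1, 0)

/-- Conjugation conj(a,b) = (conj a, −b). -/
def conj (x : Ca) : Ca := (star x.1, -x.2)

/-- Real part Re(a,b) = re a. -/
def re (x : Ca) : ℝ := x.1.re

/-- Norm form N(a,b) = ‖a‖² − ‖b‖², of signature (4,4). -/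
def N (x : Ca) : ℝ := Quaternion.normSq x.1 - Quaternion.normSq x.2

/-- The symmetric bilinear form ⟨x,y⟩ = (N(x+y) − N(x) − N(y))/2. -/
def bil (x y : Ca) : ℝ := (N (x + y) - N x - N y) / 2

/-- The vector cross product on Im(Ca'): X × Y := X·Y + g(X,Y)·1. -/
def cross (X Y : Ca) : Ca := mul X Y + bil X Y • one

end Ca

theorem bil_eq (x y : Ca) : Ca.bil x y =
    x.1.re * y.1.re + x.1.imI * y.1.imI + x.1.imJ * y.1.imJ + x.1.imK * y.1.imK
    - x.2.re * y.2.re - x.2.imI * y.2.imI - x.2.imJ * y.2.imJ - x.2.imK * y.2.imK := by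
  simp only [Ca.bil, Ca.N, Quaternion.normSq_def', Prod.fst_add, Prod.snd_add,
    Quaternion.re_add, Quaternion.imI_add, Quaternion.imJ_add, Quaternion.imK_add]
  ring

set_option maxRecDepth 100000 in
set_option maxHeartbeats 4000000 in
/-- Para-complex analogue of Lemma 2: Ω(PX,Y,Z) = Ω(X,PY,Z) = Ω(X,Y,PZ) for the
Cayley almost para-complex structure P X = n×X on the pseudosphere S^{3,3}. -/
theorem Omega_P_property (n X Y Z : Ca)
    (hn : Ca.re n = 0) (hnn : Ca.bil n n = -1)
    (hX : Ca.re X = 0) (hY : Ca.re Y = 0) (hZ : Ca.re Z = 0)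
    (hXn : Ca.bil X n = 0) (hYn : Ca.bil Y n = 0) (hZn : Ca.bil Z n = 0) :
    Ca.bil (Ca.cross (Ca.cross n X) Y) Z = Ca.bil (Ca.cross X (Ca.cross n Y)) Z ∧
    Ca.bil (Ca.cross X (Ca.cross n Y)) Z = Ca.bil (Ca.cross X Y) (Ca.cross n Z) := by
  simp only [Ca.re] at hn hX hY hZ
  clear hnn
  rw [bil_eq] at hXn hYn hZn
  simp only [bil_eq, Ca.cross, Ca.mul, Ca.one, Prod.fst_add, Prod.snd_add, Prod.smul_fst,
    Prod.smul_snd, Quaternion.re_add, Quaternion.imI_add, Quaternion.imJ_add,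
    Quaternion.imK_add, Quaternion.re_mul, Quaternion.imI_mul, Quaternion.imJ_mul,
    Quaternion.imK_mul, Quaternion.re_star, Quaternion.imI_star, Quaternion.imJ_star,
    Quaternion.imK_star, Quaternion.re_smul, Quaternion.imI_smul, Quaternion.imJ_smul,
    Quaternion.imK_smul, Quaternion.re_one, Quaternion.imI_one, Quaternion.imJ_one,
    Quaternion.imK_one, Quaternion.re_zero, Quaternion.imI_zero, Quaternion.imJ_zero,
    Quaternion.imK_zero, smul_eq_mul, hn, hX, hY, hZ,
    mul_zero, zero_mul, add_zero, zero_add, sub_zero, zero_sub, mul_one] at hXn hYn hZn ⊢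
  clear hn hX hY hZ
  generalize n.1.imI = n1, n.1.imJ = n2, n.1.imK = n3, n.2.re = n4, n.2.imI = n5, n.2.imJ = n6, n.2.imK = n7 at *
  generalize X.1.imI = x1, X.1.imJ = x2, X.1.imK = x3, X.2.re = x4, X.2.imI = x5, X.2.imJ = x6, X.2.imK = x7 at *
  generalize Y.1.imI = y1, Y.1.imJ = y2, Y.1.imK = y3, Y.2.re = y4, Y.2.imI = y5, Y.2.imJ = y6, Y.2.imK = y7 at *
  generalize Z.1.imI = z1, Z.1.imJ = z2, Z.1.imK = z3, Z.2.re = z4, Z.2.imI = z5, Z.2.imJ = z6, Z.2.imK = z7 at *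
  constructor
  · linear_combination
      (y1*z1+y2*z2+y3*z3-y4*z4-y5*z5-y6*z6-y7*z7) * hXn
      + (x1*z1+x2*z2+x3*z3-x4*z4-x5*z5-x6*z6-x7*z7) * hYn
      - 2 * (x1*y1+x2*y2+x3*y3-x4*y4-x5*y5-x6*y6-x7*y7) * hZn
  · linear_combination
      (-2) * (y1*z1+y2*z2+y3*z3-y4*z4-y5*z5-y6*z6-y7*z7) * hXn
      + (x1*z1+x2*z2+x3*z3-x4*z4-x5*z5-x6*z6-x7*z7) * hYn
      + (x1*y1+x2*y2+x3*y3-x4*y4-x5*y5-x6*y6-x7*y7) * hZn
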